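/- arXiv:2409.18559 — 7 statements merged into one kernel-verified Lean document; each statement's English description precedes it below -/
import Mathlib

section
/- For every real number y ≥ 0, |cos(√(2y)) − exp(−y)| ≤ (2/3)·y². -/
/-!
The second-order Taylor bounds `1 - x² / 2 ≤ cos x ≤ 1 - x² / 2 + x⁴ / 24` and
`1 - t ≤ exp (-t) ≤ 1 - t + t² / 2`, the latter at `t = x² / 2`, put `cos x` and `exp (-x² / 2)`
into the same interval `[1 - x² / 2, 1 - x² / 2 + x⁴ / 8]`. Hence they differ by at most `x⁴ / 8`,
which is `y² / 2` at `x = √(2 * y)`.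
-/

open Real

theorem sq_sub_pow_four_div_three_le_sin_sq (x : ℝ) : x ^ 2 - x ^ 4 / 3 ≤ sin x ^ 2 := by
  have abs_add_sin_le : |x + sin x| ≤ 2 * |x| :=
    calc |x + sin x| ≤ |x| + |sin x| := abs_add_le x (sin x)
      _ ≤ |x| + |x| := add_le_add le_rfl abs_sin_le_abs
      _ = 2 * |x| := by ring
  have sq_sub_sin_sq_le : x ^ 2 - sin x ^ 2 ≤ x ^ 4 / 3 :=
    calc x ^ 2 - sin x ^ 2 = (x - sin x) * (x + sin x) := by ring
      _ ≤ |x - sin x| * |x + sin x| := (le_abs_self _).trans_eq (abs_mul _ _)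
      _ ≤ |x| ^ 3 / 6 * (2 * |x|) := by gcongr; exact abs_sub_sin_le x
      _ = |x| ^ 4 / 3 := by ring
      _ = x ^ 4 / 3 := by rw [Even.pow_abs (by decide)]
  linarith

theorem cos_le_one_sub_sq_div_two_add_pow_four_div_twenty_four (x : ℝ) :
    cos x ≤ 1 - x ^ 2 / 2 + x ^ 4 / 24 :=
  calc cos x = 1 - 2 * sin (x / 2) ^ 2 := by
        rw [← cos_two_mul_eq_one_sub, mul_div_cancel₀ x two_ne_zero]
    _ ≤ 1 - 2 * ((x / 2) ^ 2 - (x / 2) ^ 4 / 3) := by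
        gcongr; exact sq_sub_pow_four_div_three_le_sin_sq (x / 2)
    _ = 1 - x ^ 2 / 2 + x ^ 4 / 24 := by ring

theorem exp_neg_le_one_sub_add_sq_div_two {t : ℝ} (ht : 0 ≤ t) :
    exp (-t) ≤ 1 - t + t ^ 2 / 2 := by
  have one_le_mul : 1 ≤ (1 - t + t ^ 2 / 2) * (1 + t + t ^ 2 / 2) :=
    calc (1 : ℝ) ≤ 1 + t ^ 4 / 4 := le_add_of_nonneg_right (by positivity)
      _ = (1 - t + t ^ 2 / 2) * (1 + t + t ^ 2 / 2) := by ring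
  calc exp (-t) = (exp t)⁻¹ := exp_neg t
    _ ≤ (1 + t + t ^ 2 / 2)⁻¹ := inv_anti₀ (by positivity) (quadratic_le_exp_of_nonneg ht)
    _ ≤ 1 - t + t ^ 2 / 2 := (inv_le_iff_one_le_mul₀ (by positivity)).2 one_le_mul

theorem abs_cos_sub_exp_neg_sq_div_two_le (x : ℝ) :
    |cos x - exp (-(x ^ 2 / 2))| ≤ x ^ 4 / 8 := by
  have cos_mem : cos x ∈ Set.Icc (1 - x ^ 2 / 2) (1 - x ^ 2 / 2 + x ^ 4 / 8) := by
    refine ⟨one_sub_sq_div_two_le_cos, ?_⟩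
    calc cos x ≤ 1 - x ^ 2 / 2 + x ^ 4 / 24 :=
          cos_le_one_sub_sq_div_two_add_pow_four_div_twenty_four x
      _ ≤ 1 - x ^ 2 / 2 + x ^ 4 / 8 := by gcongr; norm_num
  have exp_mem : exp (-(x ^ 2 / 2)) ∈ Set.Icc (1 - x ^ 2 / 2) (1 - x ^ 2 / 2 + x ^ 4 / 8) := by
    refine ⟨one_sub_le_exp_neg _, ?_⟩
    calc exp (-(x ^ 2 / 2)) ≤ 1 - x ^ 2 / 2 + (x ^ 2 / 2) ^ 2 / 2 :=
          exp_neg_le_one_sub_add_sq_div_two (by positivity)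
      _ = 1 - x ^ 2 / 2 + x ^ 4 / 8 := by ring
  calc |cos x - exp (-(x ^ 2 / 2))| ≤ 1 - x ^ 2 / 2 + x ^ 4 / 8 - (1 - x ^ 2 / 2) :=
        dist_le_of_mem_Icc cos_mem exp_mem
    _ = x ^ 4 / 8 := by ring

theorem stmt_1_general {y : ℝ} (hy : 0 ≤ y) : |cos √(2 * y) - exp (-y)| ≤ y ^ 2 / 2 := by
  have sq_div_two : √(2 * y) ^ 2 / 2 = y := by
    rw [sq_sqrt (by positivity), mul_div_cancel_left₀ y two_ne_zero]
  calc |cos √(2 * y) - exp (-y)| = |cos √(2 * y) - exp (-(√(2 * y) ^ 2 / 2))| := by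
        rw [sq_div_two]
    _ ≤ √(2 * y) ^ 4 / 8 := abs_cos_sub_exp_neg_sq_div_two_le _
    _ = (√(2 * y) ^ 2 / 2) ^ 2 / 2 := by ring
    _ = y ^ 2 / 2 := by rw [sq_div_two]

/-- Pointwise bound for the alternative approximate PITE:
`|cos(√(2y)) − exp(−y)| ≤ (2/3)·y²` for `y ≥ 0`. -/
theorem stmt_1 (y : ℝ) (hy : 0 ≤ y) :
    |Real.cos (Real.sqrt (2 * y)) - Real.exp (-y)| ≤ (2 / 3) * y ^ 2 :=
  (stmt_1_general hy).trans (by linarith [sq_nonneg y])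
end

section
/- Let N ≥ 1, let E = ℂ^N with the ℓ² inner product, let λ : Fin N → ℝ be nonnegative and monotone nondecreasing, let (ψ_k) be an orthonormal basis of E, and let ψ ∈ E be a unit vector with c_k = ⟨ψ_k, ψ⟩. Fix K ∈ ℕ, Δτ > 0, δ ∈ [0,1), an index m with Σ_{j ≤ m}|c_j|² ≥ 1 − δ, and set T = K·Δτ and C₁ = (Σ_{k ≤ m} λ_k⁴ |c_k|²)^{1/2}. Write AAP = Σ_k (cos(√(2Δτ λ_k)))^K c_k ψ_k and ITE = Σ_k exp(−T λ_k) c_k ψ_k. Then ITE ≠ 0, and if AAP ≠ 0, the normalized error satisfies ‖ AAP/‖AAP‖ − ITE/‖ITE‖ ‖ ≤ ( (4/3)·C₁·T·Δτ + 4√δ ) / ‖ITE‖. -/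
open Finset

/-!
For `x ≥ 0` both `cos √(2x)` and `exp (-x)` lie between `1 - x` and `1 - x + x² / 2`, so one step of
the cosine propagator misses the exact one by at most `x² / 2`. Both factors have modulus at most
`1`, so over `K` steps the error grows at most linearly in `K`. On the modes carrying all but `δ` of
the weight this controls the error of the state; on the other modes the crude bound `2` is enough.
Normalizing costs a factor `2 / ‖ITE‖`.
-/

section ScalarBounds

theorem exp_neg_le_one_sub_add_sq_div_two_s6 {x : ℝ} (hx : 0 ≤ x) :
    Real.exp (-x) ≤ 1 - x + x ^ 2 / 2 := by
  have hpos : 0 < 1 + x + x ^ 2 / 2 := by positivity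
  calc Real.exp (-x) = (Real.exp x)⁻¹ := Real.exp_neg x
    _ ≤ (1 + x + x ^ 2 / 2)⁻¹ := inv_anti₀ hpos (Real.quadratic_le_exp_of_nonneg hx)
    _ ≤ 1 - x + x ^ 2 / 2 := by
      rw [inv_le_iff_one_le_mul₀ hpos]
      nlinarith [sq_nonneg (x ^ 2)]

theorem cos_sq_le_inv_sq_add_one {x : ℝ} (hx : |x| ≤ Real.pi / 2) :
    Real.cos x ^ 2 ≤ (x ^ 2 + 1)⁻¹ := by
  obtain ⟨hx₁, hx₂⟩ := abs_le.mp hx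
  have hcos : Real.cos x ≤ 1 / √(x ^ 2 + 1) :=
    Real.cos_le_one_div_sqrt_sq_add_one (by linarith) (by linarith)
  calc Real.cos x ^ 2 ≤ (1 / √(x ^ 2 + 1)) ^ 2 :=
        pow_le_pow_left₀ (Real.cos_nonneg_of_mem_Icc ⟨hx₁, hx₂⟩) hcos 2
    _ = (x ^ 2 + 1)⁻¹ := by rw [div_pow, one_pow, Real.sq_sqrt (by positivity), one_div]

theorem cos_le_one_sub_sq_div_two_add_pow_four_div_eight (x : ℝ) :
    Real.cos x ≤ 1 - x ^ 2 / 2 + x ^ 4 / 8 := by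
  rcases le_total 2 |x| with hx | hx
  · have hsq : 2 ^ 2 ≤ x ^ 2 := by simpa only [sq_abs] using pow_le_pow_left₀ zero_le_two hx 2
    nlinarith [Real.cos_le_one x]
  · have half_le : |x / 2| ≤ Real.pi / 2 := by
      rw [abs_div, abs_two]
      linarith [Real.pi_gt_three]
    have half_angle : Real.cos x = 2 * Real.cos (x / 2) ^ 2 - 1 := by
      rw [← Real.cos_two_mul, mul_div_cancel₀ x two_ne_zero]
    have inv_le : ((x / 2) ^ 2 + 1)⁻¹ ≤ 1 - (x / 2) ^ 2 + (x / 2) ^ 4 := by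
      rw [inv_le_iff_one_le_mul₀ (by positivity)]
      linarith [sq_nonneg ((x / 2) ^ 3)]
    linarith [cos_sq_le_inv_sq_add_one half_le]

theorem abs_cos_sqrt_two_mul_sub_exp_neg_le {x : ℝ} (hx : 0 ≤ x) :
    |Real.cos √(2 * x) - Real.exp (-x)| ≤ x ^ 2 / 2 := by
  have hsq : √(2 * x) ^ 2 = 2 * x := Real.sq_sqrt (by positivity)
  have hpow : √(2 * x) ^ 4 = 4 * x ^ 2 := by linear_combination (√(2 * x) ^ 2 + 2 * x) * hsq
  have cos_lower := Real.one_sub_sq_div_two_le_cos (x := √(2 * x))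
  have cos_upper := cos_le_one_sub_sq_div_two_add_pow_four_div_eight √(2 * x)
  have exp_lower := Real.one_sub_le_exp_neg x
  have exp_upper := exp_neg_le_one_sub_add_sq_div_two_s6 hx
  rw [abs_le]
  constructor <;> linarith

theorem abs_cos_sqrt_two_mul_pow_sub_exp_neg_le {x : ℝ} (hx : 0 ≤ x) (K : ℕ) :
    |Real.cos √(2 * x) ^ K - Real.exp (-(K * x))| ≤ K * (x ^ 2 / 2) := by
  have hmax : max |Real.cos √(2 * x)| |Real.exp (-x)| ≤ 1 := by
    rw [Real.abs_exp]
    exact max_le (Real.abs_cos_le_one _) (Real.exp_le_one_iff.mpr (neg_nonpos.mpr hx))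
  calc |Real.cos √(2 * x) ^ K - Real.exp (-(K * x))|
      = |Real.cos √(2 * x) ^ K - Real.exp (-x) ^ K| := by rw [← Real.exp_nat_mul, mul_neg]
    _ ≤ |Real.cos √(2 * x) - Real.exp (-x)| * K *
          max |Real.cos √(2 * x)| |Real.exp (-x)| ^ (K - 1) := abs_pow_sub_pow_le ..
    _ ≤ x ^ 2 / 2 * K * 1 := by
      gcongr
      · exact abs_cos_sqrt_two_mul_sub_exp_neg_le hx
      · exact pow_le_one₀ (by positivity) hmax
    _ = K * (x ^ 2 / 2) := by ring

theorem abs_cos_pow_sub_exp_neg_le_two (x : ℝ) {t : ℝ} (ht : 0 ≤ t) (K : ℕ) :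
    |Real.cos x ^ K - Real.exp (-t)| ≤ 2 := by
  have hcos : |Real.cos x ^ K| ≤ 1 := by
    rw [abs_pow]
    exact pow_le_one₀ (abs_nonneg _) (Real.abs_cos_le_one x)
  have hexp : |Real.exp (-t)| ≤ 1 := by
    rwa [Real.abs_exp, Real.exp_le_one_iff, neg_nonpos]
  linarith [abs_sub (Real.cos x ^ K) (Real.exp (-t))]

end ScalarBounds

section Normalization

variable {𝕜 E : Type*} [RCLike 𝕜] [NormedAddCommGroup E] [NormedSpace 𝕜 E]

theorem norm_inv_norm_smul_sub_inv_norm_smul_le {u v : E} (hu : u ≠ 0) (hv : v ≠ 0) :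
    ‖(‖u‖ : 𝕜)⁻¹ • u - (‖v‖ : 𝕜)⁻¹ • v‖ ≤ 2 * ‖u - v‖ / ‖v‖ := by
  set e := (‖u‖ : 𝕜)⁻¹ • u
  have norm_smul_e : (‖u‖ : 𝕜) • e = u :=
    smul_inv_smul₀ (RCLike.ofReal_ne_zero.mpr (norm_ne_zero_iff.mpr hu)) u
  have norm_e : ‖e‖ = 1 := norm_smul_inv_norm hu
  have rescale : (‖v‖ : 𝕜) • (e - (‖v‖ : 𝕜)⁻¹ • v) = ((‖v‖ - ‖u‖ : ℝ) : 𝕜) • e + (u - v) := by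
    rw [smul_sub, smul_inv_smul₀ (RCLike.ofReal_ne_zero.mpr (norm_ne_zero_iff.mpr hv)),
      RCLike.ofReal_sub, sub_smul, norm_smul_e]
    abel
  rw [le_div_iff₀' (norm_pos_iff.mpr hv)]
  calc ‖v‖ * ‖e - (‖v‖ : 𝕜)⁻¹ • v‖ = ‖((‖v‖ - ‖u‖ : ℝ) : 𝕜) • e + (u - v)‖ := by
        rw [← rescale, norm_smul, RCLike.norm_ofReal, abs_norm]
    _ ≤ |‖v‖ - ‖u‖| + ‖u - v‖ := by
        simpa only [norm_smul, RCLike.norm_ofReal, norm_e, mul_one] using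
          norm_add_le (((‖v‖ - ‖u‖ : ℝ) : 𝕜) • e) (u - v)
    _ ≤ 2 * ‖u - v‖ := by linarith [abs_norm_sub_norm_le v u, norm_sub_rev u v]

end Normalization

section SpectralMultiplier

variable {ι 𝕜 E : Type*} [Fintype ι] [RCLike 𝕜] [NormedAddCommGroup E] [InnerProductSpace 𝕜 E]

/-- The image of `x` under the operator that is diagonal in the orthonormal basis `b` with
eigenvalues `f`. For an operator `H` with eigenpairs `(lam k, b k)`, the functional calculus `φ(H)`
is the case `f = φ ∘ lam`. -/
noncomputable def spectralMultiplier (b : OrthonormalBasis ι 𝕜 E) (f : ι → 𝕜) (x : E) : E :=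
  ∑ k, (f k * inner 𝕜 (b k) x) • b k

variable (b : OrthonormalBasis ι 𝕜 E)

theorem spectralMultiplier_sub (f g : ι → 𝕜) (x : E) :
    spectralMultiplier b (f - g) x = spectralMultiplier b f x - spectralMultiplier b g x := by
  simp only [spectralMultiplier, Pi.sub_apply, sub_mul, sub_smul, sum_sub_distrib]

theorem inner_spectralMultiplier (f : ι → 𝕜) (x : E) (k : ι) :
    inner 𝕜 (b k) (spectralMultiplier b f x) = f k * inner 𝕜 (b k) x :=
  b.orthonormal.inner_right_fintype _ k

theorem norm_spectralMultiplier_sq (f : ι → 𝕜) (x : E) :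
    ‖spectralMultiplier b f x‖ ^ 2 = ∑ k, ‖f k‖ ^ 2 * ‖inner 𝕜 (b k) x‖ ^ 2 := by
  simp only [← b.sum_sq_norm_inner_right, inner_spectralMultiplier, norm_mul, mul_pow]

theorem spectralMultiplier_ne_zero {f : ι → 𝕜} (hf : ∀ k, f k ≠ 0) {x : E} (hx : x ≠ 0) :
    spectralMultiplier b f x ≠ 0 := by
  contrapose! hx
  refine b.repr.map_eq_zero_iff.mp (PiLp.ext fun k => ?_)
  have hk : f k * inner 𝕜 (b k) x = 0 := by
    rw [← inner_spectralMultiplier, hx, inner_zero_right]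
  rw [b.repr_apply_apply, PiLp.zero_apply]
  exact (mul_eq_zero.mp hk).resolve_left (hf k)

theorem norm_spectralMultiplier_le {f : ι → 𝕜} {x : E} {s : Finset ι} {w : ι → ℝ} {B δ : ℝ}
    (hB : 0 ≤ B) (hfs : ∀ k ∈ s, ‖f k‖ ≤ w k) (hfB : ∀ k ∉ s, ‖f k‖ ≤ B)
    (hs : ‖x‖ ^ 2 - δ ≤ ∑ k ∈ s, ‖inner 𝕜 (b k) x‖ ^ 2) :
    ‖spectralMultiplier b f x‖ ≤ √(∑ k ∈ s, w k ^ 2 * ‖inner 𝕜 (b k) x‖ ^ 2) + B * √δ := by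
  classical
  set c : ι → ℝ := fun k => ‖inner 𝕜 (b k) x‖
  set S : ℝ := ∑ k ∈ s, w k ^ 2 * c k ^ 2
  have hS : 0 ≤ S := sum_nonneg fun _ _ => by positivity
  have tail_le : ∑ k ∈ sᶜ, c k ^ 2 ≤ δ := by
    linarith [sum_add_sum_compl s (fun k => c k ^ 2), b.sum_sq_norm_inner_right x]
  have hδ : 0 ≤ δ := (sum_nonneg fun _ _ => by positivity).trans tail_le
  refine le_of_sq_le_sq ?_ (by positivity)
  calc ‖spectralMultiplier b f x‖ ^ 2
      = ∑ k ∈ s, ‖f k‖ ^ 2 * c k ^ 2 + ∑ k ∈ sᶜ, ‖f k‖ ^ 2 * c k ^ 2 := by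
        rw [norm_spectralMultiplier_sq, sum_add_sum_compl]
    _ ≤ S + ∑ k ∈ sᶜ, B ^ 2 * c k ^ 2 := by
        simp only [S]
        gcongr with k hk k hk
        · exact hfs k hk
        · exact hfB k (mem_compl.mp hk)
    _ ≤ S + B ^ 2 * δ := by
        rw [← mul_sum]
        gcongr
    _ = √S ^ 2 + (B * √δ) ^ 2 := by rw [mul_pow, Real.sq_sqrt hS, Real.sq_sqrt hδ]
    _ ≤ (√S + B * √δ) ^ 2 := by
        nlinarith [mul_nonneg (Real.sqrt_nonneg S) (mul_nonneg hB (Real.sqrt_nonneg δ))]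

end SpectralMultiplier

section ImaginaryTime

variable {ι 𝕜 E : Type*} [Fintype ι] [RCLike 𝕜] [NormedAddCommGroup E] [InnerProductSpace 𝕜 E]

/-- The `K`-step alternative approximate PITE state `cos(√(2Δτ𝓗))^K ψ`, where `𝓗` has the
eigenpairs `(lam k, b k)`. -/
noncomputable def alternativePITE (b : OrthonormalBasis ι 𝕜 E)
    (lam : ι → ℝ) (Δτ : ℝ) (K : ℕ) (ψ : E) : E :=
  spectralMultiplier b (fun k => ((Real.cos √(2 * Δτ * lam k) ^ K : ℝ) : 𝕜)) ψ

/-- The exact imaginary-time-evolved state `e^{-T𝓗} ψ`, where `𝓗` has the eigenpairs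
`(lam k, b k)`. -/
noncomputable def imaginaryTimeEvolution (b : OrthonormalBasis ι 𝕜 E)
    (lam : ι → ℝ) (T : ℝ) (ψ : E) : E :=
  spectralMultiplier b (fun k => ((Real.exp (-(T * lam k)) : ℝ) : 𝕜)) ψ

variable (b : OrthonormalBasis ι 𝕜 E)

theorem imaginaryTimeEvolution_ne_zero (lam : ι → ℝ) (T : ℝ) {ψ : E} (hψ : ψ ≠ 0) :
    imaginaryTimeEvolution b lam T ψ ≠ 0 :=
  spectralMultiplier_ne_zero b (fun _ => RCLike.ofReal_ne_zero.mpr (Real.exp_ne_zero _)) hψ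

variable {lam : ι → ℝ} {ψ : E} {Δτ δ : ℝ} {s : Finset ι}

theorem norm_alternativePITE_sub_imaginaryTimeEvolution_le (hlam : ∀ k, 0 ≤ lam k)
    (hΔτ : 0 ≤ Δτ) (K : ℕ) (hs : ‖ψ‖ ^ 2 - δ ≤ ∑ k ∈ s, ‖inner 𝕜 (b k) ψ‖ ^ 2) :
    ‖alternativePITE b lam Δτ K ψ - imaginaryTimeEvolution b lam (K * Δτ) ψ‖ ≤
      1 / 2 * √(∑ k ∈ s, lam k ^ 4 * ‖inner 𝕜 (b k) ψ‖ ^ 2) * (K * Δτ) * Δτ + 2 * √δ := by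
  set A : ℝ := K * Δτ * Δτ / 2
  have hA : 0 ≤ A := by positivity
  have multiplier_le (k : ι) :
      |Real.cos √(2 * Δτ * lam k) ^ K - Real.exp (-(K * Δτ * lam k))| ≤ A * lam k ^ 2 := by
    have h := abs_cos_sqrt_two_mul_pow_sub_exp_neg_le (mul_nonneg hΔτ (hlam k)) K
    rw [← mul_assoc, ← mul_assoc] at h
    exact h.trans_eq (by ring)
  have multiplier_le_two (k : ι) :
      |Real.cos √(2 * Δτ * lam k) ^ K - Real.exp (-(K * Δτ * lam k))| ≤ 2 :=
    abs_cos_pow_sub_exp_neg_le_two _ (mul_nonneg (by positivity) (hlam k)) K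
  have sqrt_sum_eq : √(∑ k ∈ s, (A * lam k ^ 2) ^ 2 * ‖inner 𝕜 (b k) ψ‖ ^ 2) =
      A * √(∑ k ∈ s, lam k ^ 4 * ‖inner 𝕜 (b k) ψ‖ ^ 2) := by
    simp only [mul_pow, ← pow_mul, mul_assoc, ← mul_sum]
    rw [Real.sqrt_mul (sq_nonneg A), Real.sqrt_sq hA]
  rw [alternativePITE, imaginaryTimeEvolution, ← spectralMultiplier_sub]
  refine (norm_spectralMultiplier_le b (w := fun k => A * lam k ^ 2) zero_le_two
    (fun k _ => ?_) (fun k _ => ?_) hs).trans_eq (by rw [sqrt_sum_eq]; ring)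
  all_goals rw [Pi.sub_apply, ← RCLike.ofReal_sub, RCLike.norm_ofReal]
  exacts [multiplier_le k, multiplier_le_two k]

theorem stmt_6_general (hlam : ∀ k, 0 ≤ lam k) (hψ : ψ ≠ 0) (hΔτ : 0 ≤ Δτ) (K : ℕ)
    (hs : ‖ψ‖ ^ 2 - δ ≤ ∑ k ∈ s, ‖inner 𝕜 (b k) ψ‖ ^ 2) :
    let AAP := alternativePITE b lam Δτ K ψ
    let ITE := imaginaryTimeEvolution b lam (K * Δτ) ψ
    ITE ≠ 0 ∧ (AAP ≠ 0 → ‖(‖AAP‖ : 𝕜)⁻¹ • AAP - (‖ITE‖ : 𝕜)⁻¹ • ITE‖ ≤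
      (√(∑ k ∈ s, lam k ^ 4 * ‖inner 𝕜 (b k) ψ‖ ^ 2) * (K * Δτ) * Δτ + 4 * √δ) / ‖ITE‖) := by
  intro AAP ITE
  have hITE : ITE ≠ 0 := imaginaryTimeEvolution_ne_zero b lam (K * Δτ) hψ
  refine ⟨hITE, fun hAAP => (norm_inv_norm_smul_sub_inv_norm_smul_le hAAP hITE).trans ?_⟩
  gcongr
  linarith [norm_alternativePITE_sub_imaginaryTimeEvolution_le b hlam hΔτ K hs]

end ImaginaryTime

/-- Normalized error of the `K`-step alternative approximate PITE state `AAP` versus the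
exact imaginary-time-evolved state `ITE = e^{−T𝓗}ψ`:  `ITE ≠ 0` and, if `AAP ≠ 0`,
`‖AAP/‖AAP‖ − ITE/‖ITE‖‖ ≤ ((4/3)C₁TΔτ + 4√δ)/‖ITE‖`. -/
theorem stmt_6 (N : ℕ) (hN : 1 ≤ N)
    (ψb : OrthonormalBasis (Fin N) ℂ (EuclideanSpace ℂ (Fin N)))
    (lam : Fin N → ℝ) (hlam : ∀ k, 0 ≤ lam k) (hmono : Monotone lam)
    (ψ : EuclideanSpace ℂ (Fin N)) (hψ : ‖ψ‖ = 1)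
    (c : Fin N → ℂ) (hc : ∀ k, c k = inner ℂ (ψb k) ψ)
    (K : ℕ) (Δτ : ℝ) (hΔτ : 0 < Δτ) (δ : ℝ) (hδ : δ ∈ Set.Ico (0:ℝ) 1)
    (m : Fin N) (hm : 1 - δ ≤ ∑ j ∈ Finset.Iic m, ‖c j‖ ^ 2)
    (T : ℝ) (hT : T = K * Δτ)
    (C₁ : ℝ) (hC₁ : C₁ = Real.sqrt (∑ k ∈ Finset.Iic m, lam k ^ 4 * ‖c k‖ ^ 2))
    (AAP ITE : EuclideanSpace ℂ (Fin N))
    (hAAP : AAP = ∑ k, ((((Real.cos (Real.sqrt (2 * Δτ * lam k))) ^ K : ℝ) : ℂ) * c k) • ψb k)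
    (hITE : ITE = ∑ k, (((Real.exp (-(T * lam k)) : ℝ) : ℂ) * c k) • ψb k) :
    ITE ≠ 0 ∧
    (AAP ≠ 0 →
      ‖(‖AAP‖ : ℂ)⁻¹ • AAP - (‖ITE‖ : ℂ)⁻¹ • ITE‖
        ≤ ((4 / 3) * C₁ * T * Δτ + 4 * Real.sqrt δ) / ‖ITE‖) := by
  obtain rfl : c = fun k => inner ℂ (ψb k) ψ := funext hc
  obtain rfl : AAP = alternativePITE ψb lam Δτ K ψ := hAAP
  subst hT hC₁
  obtain rfl : ITE = imaginaryTimeEvolution ψb lam (K * Δτ) ψ := hITE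
  have hψ₀ : ψ ≠ 0 := norm_ne_zero_iff.mp (hψ ▸ one_ne_zero)
  obtain ⟨ITE_ne_zero, error_le⟩ :=
    stmt_6_general ψb hlam hψ₀ hΔτ.le K (by rwa [hψ, one_pow])
  refine ⟨ITE_ne_zero, fun hAAP => (error_le hAAP).trans ?_⟩
  gcongr
  exact le_mul_of_one_le_left (Real.sqrt_nonneg _) (by norm_num)
end

section
/- Let X be a complex Banach space and let A, B : X →L X be bounded linear operators such that for all t ≥ 0, ‖exp(−tA)‖ ≤ 1, ‖exp(−tB)‖ ≤ 1, and ‖exp(−t(A+B))‖ ≤ 1 (operator norms). Then for every x ∈ X and every t > 0, ‖ ( exp(−tA)·exp(−tB) − exp(−t(A+B)) ) x ‖ ≤ ( ‖B‖²·‖x‖ + (1/2)·sup_{0 ≤ s ≤ t} ‖ (A∘B − B∘A)( exp(−s(A+B)) x ) ‖ )·t². -/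
open NormedSpace Set

/-!
The path `u s = e^{(t-s)A} e^{s(A+B)} x` runs from `e^{tA} x` to `e^{t(A+B)} x`. Its derivatives are
`u' s = e^{(t-s)A} B e^{s(A+B)} x` and `u'' s = e^{(t-s)A} (B² - [A, B]) e^{s(A+B)} x`, so its
first-order Taylor polynomial at `0` is `e^{tA} (x + t B x)`, which is also `e^{tA}` applied to the
first-order Taylor polynomial of `e^{tB} x`. The Trotter error is therefore a difference of two
second-order Taylor remainders. For semigroups with generators `-A`, `-B` on a complex space, one
restricts scalars to `ℝ` and replaces `A`, `B` by their negatives, which does not change `[A, B]`.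
-/

section Taylor

variable {E : Type*} [NormedAddCommGroup E] [NormedSpace ℝ E]

theorem norm_sub_sub_smul_le_of_norm_deriv_deriv_le {f f' f'' : ℝ → E} {a b K : ℝ} (hab : a ≤ b)
    (hf : ∀ s ∈ Icc a b, HasDerivWithinAt f (f' s) (Icc a b) s)
    (hf' : ∀ s ∈ Icc a b, HasDerivWithinAt f' (f'' s) (Icc a b) s)
    (bound : ∀ s ∈ Ico a b, ‖f'' s‖ ≤ K) :
    ‖f b - f a - (b - a) • f' a‖ ≤ K * (b - a) ^ 2 / 2 := by
  have norm_deriv_le : ∀ s ∈ Icc a b, ‖f' s - f' a‖ ≤ K * (s - a) :=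
    norm_image_sub_le_of_norm_deriv_le_segment' hf' bound
  have remainder_deriv : ∀ s ∈ Icc a b,
      HasDerivWithinAt (fun s ↦ f s - f a - (s - a) • f' a) (f' s - f' a) (Icc a b) s := by
    intro s hs
    simpa using ((hf s hs).sub_const (f a)).fun_sub
      (((hasDerivWithinAt_id s _).sub_const a).smul_const (f' a))
  have majorant_deriv : ∀ s, HasDerivAt (fun s ↦ K * (s - a) ^ 2 / 2) (K * (s - a)) s := by
    intro s
    refine (((((hasDerivAt_id' s).sub_const a).fun_pow 2).const_mul K).div_const 2).congr_deriv ?_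
    simp only [Nat.cast_ofNat]
    ring
  exact image_norm_le_of_norm_deriv_right_le_deriv_boundary
    (fun s hs ↦ (remainder_deriv s hs).continuousWithinAt)
    (fun s hs ↦ (remainder_deriv s (Ico_subset_Icc_self hs)).mono_of_mem_nhdsWithin
      (Icc_mem_nhdsGE_of_mem hs))
    (by simp) majorant_deriv (fun s hs ↦ norm_deriv_le s (Ico_subset_Icc_self hs))
    (right_mem_Icc.2 hab)

end Taylor

theorem norm_apply_apply_le {𝕜 X : Type*} [NontriviallyNormedField 𝕜] [SeminormedAddCommGroup X]
    [NormedSpace 𝕜 X] (T : X →L[𝕜] X) (x : X) : ‖T (T x)‖ ≤ ‖T‖ ^ 2 * ‖x‖ :=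
  (T.le_opNorm_of_le (T.le_opNorm x)).trans_eq (by ring)

theorem hasDerivAt_exp_sub_smul_mul_mul_exp_smul {𝔸 : Type*} [NormedRing 𝔸] [NormedAlgebra ℝ 𝔸]
    [CompleteSpace 𝔸] (a c d : 𝔸) (t s : ℝ) :
    HasDerivAt (fun s : ℝ ↦ exp ((t - s) • a) * d * exp (s • c))
      (exp ((t - s) • a) * (d * c - a * d) * exp (s • c)) s := by
  have left_deriv : HasDerivAt (fun s : ℝ ↦ exp ((t - s) • a)) (-(exp ((t - s) • a) * a)) s :=
    (hasDerivAt_exp_smul_const a (t - s)).comp_const_sub t s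
  refine ((left_deriv.mul_const d).fun_mul (hasDerivAt_exp_smul_const' c s)).congr_deriv ?_
  simp only [neg_mul, mul_sub, sub_mul, mul_assoc, neg_add_eq_sub]

theorem restrictScalars_exp {𝕜 X : Type*} [NontriviallyNormedField 𝕜] [NormedAlgebra ℝ 𝕜]
    [NormedAddCommGroup X] [NormedSpace 𝕜 X] [NormedSpace ℝ X] [IsScalarTower ℝ 𝕜 X]
    [CompleteSpace X] (T : X →L[𝕜] X) :
    (exp T).restrictScalars ℝ = exp (T.restrictScalars ℝ) := by
  let restrict : (X →L[𝕜] X) →+* (X →L[ℝ] X) :=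
    { toFun := ContinuousLinearMap.restrictScalars ℝ
      map_one' := rfl
      map_mul' _ _ := rfl
      map_zero' := rfl
      map_add' _ _ := rfl }
  let _ : NormedAlgebra ℚ 𝕜 := .restrictScalars ℚ ℝ 𝕜
  let _ : NormedAlgebra ℚ (X →L[𝕜] X) := .restrictScalars ℚ 𝕜 _
  let _ : NormedAlgebra ℚ (X →L[ℝ] X) := .restrictScalars ℚ ℝ _
  exact map_exp restrict (ContinuousLinearMap.continuous_restrictScalars ℝ) T

theorem exp_smul_neg_restrictScalars {X : Type*} [NormedAddCommGroup X] [NormedSpace ℂ X]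
    [CompleteSpace X] (T : X →L[ℂ] X) (s : ℝ) :
    exp (s • (-T).restrictScalars ℝ) = (exp ((-(s : ℂ)) • T)).restrictScalars ℝ := by
  rw [restrictScalars_exp, neg_smul, Complex.coe_smul, ← smul_neg]
  rfl

section Trotter

variable {X : Type*} [NormedAddCommGroup X] [NormedSpace ℝ X] [CompleteSpace X]
variable (A B : X →L[ℝ] X) (x : X) {t : ℝ}

theorem norm_exp_smul_apply_sub_sub_le {M : ℝ} (ht : 0 ≤ t)
    (hB : ∀ s ∈ Icc 0 t, ‖exp (s • B)‖ ≤ M) :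
    ‖exp (t • B) x - x - t • B x‖ ≤ M * (‖B‖ ^ 2 * ‖x‖) * t ^ 2 / 2 := by
  have hasDerivAt_orbit (y : X) (s : ℝ) :
      HasDerivAt (fun s : ℝ ↦ exp (s • B) y) (exp (s • B) (B y)) s := by
    simpa using (hasDerivAt_exp_smul_const B s).clm_apply (hasDerivAt_const s y)
  simpa using norm_sub_sub_smul_le_of_norm_deriv_deriv_le ht
    (fun s _ ↦ (hasDerivAt_orbit x s).hasDerivWithinAt)
    (fun s _ ↦ (hasDerivAt_orbit (B x) s).hasDerivWithinAt)
    (fun s hs ↦ (exp (s • B)).le_of_opNorm_le_of_le (hB s (Ico_subset_Icc_self hs))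
      (norm_apply_apply_le B x))

theorem norm_exp_smul_add_apply_sub_sub_le {M K : ℝ} (ht : 0 ≤ t)
    (hA : ∀ s ∈ Icc 0 t, ‖exp (s • A)‖ ≤ M)
    (hK : ∀ s ∈ Icc 0 t, ‖(B * B - (A * B - B * A)) (exp (s • (A + B)) x)‖ ≤ K) :
    ‖exp (t • (A + B)) x - exp (t • A) x - t • exp (t • A) (B x)‖ ≤ M * K * t ^ 2 / 2 := by
  have hasDerivAt_path (D : X →L[ℝ] X) (s : ℝ) :
      HasDerivAt (fun s : ℝ ↦ (exp ((t - s) • A) * D * exp (s • (A + B))) x)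
        ((exp ((t - s) • A) * (D * (A + B) - A * D) * exp (s • (A + B))) x) s := by
    simpa using (hasDerivAt_exp_sub_smul_mul_mul_exp_smul A (A + B) D t s).clm_apply
      (hasDerivAt_const s x)
  have path_deriv_coeff : 1 * (A + B) - A * 1 = B := by noncomm_ring
  have path_deriv_deriv_coeff : B * (A + B) - A * B = B * B - (A * B - B * A) := by noncomm_ring
  have path_deriv := hasDerivAt_path 1
  have path_deriv_deriv := hasDerivAt_path B
  rw [path_deriv_coeff] at path_deriv
  rw [path_deriv_deriv_coeff] at path_deriv_deriv
  simpa using norm_sub_sub_smul_le_of_norm_deriv_deriv_le ht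
    (fun s _ ↦ (path_deriv s).hasDerivWithinAt)
    (fun s _ ↦ (path_deriv_deriv s).hasDerivWithinAt)
    (fun s hs ↦ (exp ((t - s) • A)).le_of_opNorm_le_of_le
      (hA (t - s) ⟨sub_nonneg.2 hs.2.le, sub_le_self t hs.1⟩) (hK s (Ico_subset_Icc_self hs)))

theorem bddAbove_range_norm_apply_exp_smul (T C : X →L[ℝ] X) (t : ℝ) :
    BddAbove (range fun s : Icc 0 t ↦ ‖T (exp ((s : ℝ) • C) x)‖) := by
  have exp_continuous : Continuous fun s : ℝ ↦ exp (s • C) :=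
    (differentiable_exp_smul_const ℝ C).continuous
  exact (isCompact_range (T.continuous.comp
    ((exp_continuous.comp continuous_subtype_val).clm_apply continuous_const)).norm).bddAbove

theorem norm_mul_self_sub_commutator_apply_exp_le {M s : ℝ} (hs : s ∈ Icc 0 t)
    (hAB : ‖exp (s • (A + B))‖ ≤ M) :
    ‖(B * B - (A * B - B * A)) (exp (s • (A + B)) x)‖
      ≤ M * (‖B‖ ^ 2 * ‖x‖)
        + ⨆ r : Icc 0 t, ‖(A * B - B * A) (exp ((r : ℝ) • (A + B)) x)‖ := by
  have square_le : ‖(B * B) (exp (s • (A + B)) x)‖ ≤ M * (‖B‖ ^ 2 * ‖x‖) :=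
    calc ‖(B * B) (exp (s • (A + B)) x)‖
        ≤ ‖B‖ ^ 2 * ‖exp (s • (A + B)) x‖ := norm_apply_apply_le B _
      _ ≤ ‖B‖ ^ 2 * (M * ‖x‖) := by gcongr; exact ContinuousLinearMap.le_of_opNorm_le _ hAB x
      _ = M * (‖B‖ ^ 2 * ‖x‖) := mul_left_comm _ _ _
  exact (norm_sub_le _ _).trans <| add_le_add square_le <|
    le_ciSup (bddAbove_range_norm_apply_exp_smul x (A * B - B * A) (A + B) t) ⟨s, hs⟩

theorem stmt_8_general {M_A M_B M_AB : ℝ} (ht : 0 ≤ t)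
    (hA : ∀ s ∈ Icc 0 t, ‖exp (s • A)‖ ≤ M_A)
    (hB : ∀ s ∈ Icc 0 t, ‖exp (s • B)‖ ≤ M_B)
    (hAB : ∀ s ∈ Icc 0 t, ‖exp (s • (A + B))‖ ≤ M_AB) :
    ‖(exp (t • A) * exp (t • B) - exp (t • (A + B))) x‖
      ≤ M_A * ((M_B + M_AB) / 2 * (‖B‖ ^ 2 * ‖x‖)
          + 1 / 2 * ⨆ s : Icc 0 t, ‖(A * B - B * A) (exp ((s : ℝ) • (A + B)) x)‖) * t ^ 2 := by
  have remainder_B : ‖exp (t • A) (exp (t • B) x - x - t • B x)‖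
      ≤ M_A * (M_B * (‖B‖ ^ 2 * ‖x‖) * t ^ 2 / 2) :=
    ContinuousLinearMap.le_of_opNorm_le_of_le _ (hA t (right_mem_Icc.2 ht))
      (norm_exp_smul_apply_sub_sub_le B x ht hB)
  have remainder_AB := norm_exp_smul_add_apply_sub_sub_le A B x ht hA
    fun s hs ↦ norm_mul_self_sub_commutator_apply_exp_le A B x hs (hAB s hs)
  calc ‖(exp (t • A) * exp (t • B) - exp (t • (A + B))) x‖
      = ‖exp (t • A) (exp (t • B) x - x - t • B x)
          - (exp (t • (A + B)) x - exp (t • A) x - t • exp (t • A) (B x))‖ := by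
        simp only [sub_apply, mul_apply_eq_comp, map_sub, map_smul]
        congr 1
        abel
    _ ≤ _ := (norm_sub_le _ _).trans (add_le_add remainder_B remainder_AB)
    _ = _ := by ring

end Trotter

/-- First-order Suzuki–Trotter error bound (Lemma 1 of the paper, bounded-operator form):
if the semigroups generated by `−A`, `−B` and `−(A+B)` are contractions, then
`‖(e^{−tA}e^{−tB} − e^{−t(A+B)})x‖ ≤ (‖B‖²‖x‖ + (1/2)·sup_{0≤s≤t}‖[A,B]e^{−s(A+B)}x‖)·t²`. -/
theorem stmt_8 {X : Type*} [NormedAddCommGroup X] [NormedSpace ℂ X] [CompleteSpace X]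
    (A B : X →L[ℂ] X)
    (hA : ∀ t : ℝ, 0 ≤ t → ‖NormedSpace.exp ((-(t : ℂ)) • A)‖ ≤ 1)
    (hB : ∀ t : ℝ, 0 ≤ t → ‖NormedSpace.exp ((-(t : ℂ)) • B)‖ ≤ 1)
    (hAB : ∀ t : ℝ, 0 ≤ t → ‖NormedSpace.exp ((-(t : ℂ)) • (A + B))‖ ≤ 1)
    (x : X) (t : ℝ) (ht : 0 < t) :
    ‖(NormedSpace.exp ((-(t : ℂ)) • A) * NormedSpace.exp ((-(t : ℂ)) • B)
        - NormedSpace.exp ((-(t : ℂ)) • (A + B))) x‖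
      ≤ (‖B‖ ^ 2 * ‖x‖
          + (1 / 2) * ⨆ s : Icc (0 : ℝ) t,
              ‖(A ∘L B - B ∘L A) ((NormedSpace.exp ((-((s : ℝ) : ℂ)) • (A + B))) x)‖) * t ^ 2 := by
  have exp_eq := exp_smul_neg_restrictScalars (X := X)
  have exp_add_eq (s : ℝ) : exp (s • ((-A).restrictScalars ℝ + (-B).restrictScalars ℝ))
      = (exp ((-(s : ℂ)) • (A + B))).restrictScalars ℝ := by
    rw [← exp_eq, neg_add, ContinuousLinearMap.restrictScalars_add]
  have bound := stmt_8_general ((-A).restrictScalars ℝ) ((-B).restrictScalars ℝ) x ht.le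
    (fun s hs ↦ (congrArg norm (exp_eq A s)).trans_le (hA s hs.1))
    (fun s hs ↦ (congrArg norm (exp_eq B s)).trans_le (hB s hs.1))
    (fun s hs ↦ (congrArg norm (exp_add_eq s)).trans_le (hAB s hs.1))
  -- `exp_eq` must be used before `restrictScalars_neg` rewrites its left-hand side.
  simp only [exp_eq, exp_add_eq] at bound
  simp only [ContinuousLinearMap.restrictScalars_neg, neg_mul_neg, norm_neg,
    ContinuousLinearMap.norm_restrictScalars, add_self_div_two, one_mul] at bound
  exact bound
end

section
/- Let n be a finite index type and let C, S be arbitrary n×n complex matrices. Let q₀ = (1+i)/√2 and q₁ = (−1+i)/√2, and let D be the 2n×2n block-diagonal matrix fromBlocks (q₀•1) 0 0 (q₁•1). Then fromBlocks C (i•S) (i•S) C = D * (fromBlocks C (−S) S C) * Dᴴ, where Dᴴ is the conjugate transpose of D. In particular, with C = cos Θ and S = sin Θ, the two PITE unitaries 𝓜(Θ) = [[cos Θ, i sin Θ],[i sin Θ, cos Θ]] and 𝓜̃(Θ) = [[cos Θ, −sin Θ],[sin Θ, cos Θ]] are conjugate by the single-qubit gate Q = (1/√2)·diag(1+i, −1+i)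 acting on the ancilla: 𝓜(Θ) = (Q⊗I)·𝓜̃(Θ)·(Q†⊗I). -/
open Matrix

/-!
The gate `diag(q₀, q₁)` equals `q₀ • diag(1, i)`. Conjugation cancels the phase `q₀`, fixes the
diagonal blocks, and multiplies the upper right block by `star i = -i` and the lower left block
by `i`, which turns both `-S` and `S` into `i • S`.
-/

section BlockDiagonalConjugation

variable {m n R α : Type*} [Fintype m] [Fintype n]

theorem fromBlocks_diag_mul_mul_conjTranspose {k l : Type*} [NonUnitalSemiring α] [StarRing α]
    (U : Matrix k m α) (V : Matrix l n α)
    (A : Matrix m m α) (B : Matrix m n α) (C : Matrix n m α) (D : Matrix n n α) :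
    fromBlocks U 0 0 V * fromBlocks A B C D * (fromBlocks U 0 0 V)ᴴ =
      fromBlocks (U * A * Uᴴ) (U * B * Vᴴ) (V * C * Uᴴ) (V * D * Vᴴ) := by
  simp only [fromBlocks_conjTranspose, fromBlocks_multiply, conjTranspose_zero,
    Matrix.zero_mul, Matrix.mul_zero, add_zero, zero_add]

variable [DecidableEq m] [DecidableEq n] [CommSemiring R] [Star R]

theorem smul_one_mul_mul_conjTranspose_smul_one [Semiring α] [StarRing α] [Algebra R α]
    [StarModule R α] (a b : R) (A : Matrix m n α) :
    (a • (1 : Matrix m m α)) * A * (b • (1 : Matrix n n α))ᴴ = (a * star b) • A := by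
  rw [conjTranspose_smul, conjTranspose_one, Matrix.smul_mul, Matrix.one_mul, Matrix.mul_smul,
    Matrix.mul_one, smul_smul, mul_comm]

end BlockDiagonalConjugation

theorem stmt_11_general {n R α : Type*} [Fintype n] [DecidableEq n] [CommRing R] [StarRing R]
    [Ring α] [StarRing α] [Algebra R α] [StarModule R α] (C S : Matrix n n α) {q i : R}
    (hq : q ∈ unitary R) (hi : i ∈ unitary R) (hi_star : star i = -i) :
    fromBlocks C (i • S) (i • S) C =
      fromBlocks (q • (1 : Matrix n n α)) 0 0 ((i * q) • (1 : Matrix n n α)) *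
        fromBlocks C (-S) S C *
          (fromBlocks (q • (1 : Matrix n n α)) 0 0 ((i * q) • (1 : Matrix n n α)))ᴴ := by
  have hqq : q * star q = 1 := Unitary.mul_star_self_of_mem hq
  have h_lower_right : i * q * star (i * q) = 1 := Unitary.mul_star_self_of_mem (mul_mem hi hq)
  have h_upper_right : q * star (i * q) = -i := by
    rw [star_mul, ← mul_assoc, hqq, one_mul, hi_star]
  have h_lower_left : i * q * star q = i := by rw [mul_assoc, hqq, mul_one]
  simp only [fromBlocks_diag_mul_mul_conjTranspose, smul_one_mul_mul_conjTranspose_smul_one,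
    hqq, h_lower_right, h_upper_right, h_lower_left, one_smul, neg_smul_neg]

theorem I_mem_unitary : Complex.I ∈ unitary ℂ := by
  simp [Unitary.mem_iff_star_mul_self]

theorem one_add_I_div_sqrt_two_mem_unitary :
    (1 + Complex.I) / (Real.sqrt 2 : ℂ) ∈ unitary ℂ := by
  have h_sqrt : (Real.sqrt 2 : ℂ) * (Real.sqrt 2 : ℂ) = 2 := by
    exact_mod_cast Real.mul_self_sqrt zero_le_two
  rw [Unitary.mem_iff_self_mul_star]
  calc (1 + Complex.I) / (Real.sqrt 2 : ℂ) * star ((1 + Complex.I) / (Real.sqrt 2 : ℂ))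
      = (1 + Complex.I) * (1 - Complex.I) / ((Real.sqrt 2 : ℂ) * (Real.sqrt 2 : ℂ)) := by
        simp [div_mul_div_comm, sub_eq_add_neg]
    _ = 1 := by
        rw [h_sqrt]
        linear_combination (-1 / 2 : ℂ) * Complex.I_mul_I

theorem neg_one_add_I_div_eq_I_mul (z : ℂ) :
    (-1 + Complex.I) / z = Complex.I * ((1 + Complex.I) / z) := by
  rw [← mul_div_assoc, mul_add, mul_one, Complex.I_mul_I, add_comm]

/-- Equivalence of the two PITE block encodings: for arbitrary blocks `C`, `S`,
with `q₀ = (1+i)/√2`, `q₁ = (−1+i)/√2` and `D = fromBlocks (q₀•1) 0 0 (q₁•1)`,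
`[[C, iS],[iS, C]] = D · [[C, −S],[S, C]] · Dᴴ`. -/
theorem stmt_11 {n : Type*} [Fintype n] [DecidableEq n] (C S : Matrix n n ℂ)
    (q₀ q₁ : ℂ) (hq₀ : q₀ = (1 + Complex.I) / (Real.sqrt 2 : ℂ))
    (hq₁ : q₁ = (-1 + Complex.I) / (Real.sqrt 2 : ℂ))
    (D : Matrix (n ⊕ n) (n ⊕ n) ℂ)
    (hD : D = Matrix.fromBlocks (q₀ • (1 : Matrix n n ℂ)) 0 0 (q₁ • (1 : Matrix n n ℂ))) :
    Matrix.fromBlocks C (Complex.I • S) (Complex.I • S) C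
      = D * Matrix.fromBlocks C (-S) S C * Dᴴ := by
  rw [hD, hq₁, neg_one_add_I_div_eq_I_mul, ← hq₀]
  exact stmt_11_general C S (hq₀ ▸ one_add_I_div_sqrt_two_mem_unitary) I_mem_unitary Complex.conj_I
end

section
/- Fix m₀ ∈ (0,1) and set s₀ = m₀/√(1 − m₀²) and θ₀ = arccos(m₀). Then for every real x ≥ 0, | cos(θ₀ + s₀·x) − m₀·exp(−x) | ≤ (s₀² + m₀)·x²/2. -/
/-! The relations `cos θ₀ = m₀` and `s₀ sin θ₀ = m₀` say that `cos (θ₀ + s₀ x)` and `m₀ exp (-x)`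
have the same affine part `m₀ (1 - x)` at `0`, so only their second-order remainders are left. Both
remainders are instances of `‖exp z - 1 - z‖ ≤ ‖z‖ ^ 2 / 2` on the half-plane `re z ≤ 0`: with `z`
purely imaginary for the cosine, and `z = -x` for the exponential. -/

open Finset
open scoped Nat

section PowDivFactorial

variable {𝕜 : Type*} [NontriviallyNormedField 𝕜] [CharZero 𝕜]

theorem hasDerivAt_pow_succ_div_factorial (n : ℕ) (x : 𝕜) :
    HasDerivAt (fun y : 𝕜 ↦ y ^ (n + 1) / (n + 1)!) (x ^ n / n !) x := by
  refine ((hasDerivAt_pow (n + 1) x).div_const _).congr_deriv ?_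
  rw [Nat.add_sub_cancel, Nat.factorial_succ, Nat.cast_mul,
    mul_div_mul_left _ _ (Nat.cast_ne_zero.2 n.succ_ne_zero)]

theorem hasDerivAt_sum_pow_div_factorial (n : ℕ) (x : 𝕜) :
    HasDerivAt (fun y : 𝕜 ↦ ∑ k ∈ range (n + 1), y ^ k / k !) (∑ k ∈ range n, x ^ k / k !) x := by
  simp only [sum_range_succ' _ n, pow_zero]
  exact (HasDerivAt.fun_sum fun k _ ↦ hasDerivAt_pow_succ_div_factorial k x).add_const _

end PowDivFactorial

theorem norm_exp_sub_sum_le_of_re_nonpos (n : ℕ) {z : ℂ} (hz : z.re ≤ 0) :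
    ‖Complex.exp z - ∑ k ∈ range n, z ^ k / (k ! : ℂ)‖ ≤ ‖z‖ ^ n / n ! := by
  -- Along the segment from `0` to `z`, which stays where `‖exp‖ ≤ 1`, the remainder of order
  -- `n + 1` is an antiderivative of the remainder of order `n`.
  induction n generalizing z with
  | zero => simpa [Complex.norm_exp] using hz
  | succ n ih =>
    let R (m : ℕ) (w : ℂ) : ℂ := Complex.exp w - ∑ k ∈ range m, w ^ k / (k ! : ℂ)
    have hR (t : ℝ) : HasDerivAt (fun t : ℝ ↦ R (n + 1) (t * z)) (R n (t * z) * z) t := by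
      have hline : HasDerivAt (fun t : ℝ ↦ (t : ℂ) * z) z t := by
        simpa only [Complex.ofReal_one, one_mul, id] using
          (hasDerivAt_id t).ofReal_comp.mul_const z
      exact ((Complex.hasDerivAt_exp _).sub (hasDerivAt_sum_pow_div_factorial n _)).comp t hline
    have hB (t : ℝ) : HasDerivAt (fun t : ℝ ↦ (t * ‖z‖) ^ (n + 1) / (n + 1)!)
        ((t * ‖z‖) ^ n / n ! * ‖z‖) t :=
      HasDerivAt.comp (h₂ := fun y : ℝ ↦ y ^ (n + 1) / (n + 1)!) t
        (hasDerivAt_pow_succ_div_factorial n (t * ‖z‖)) (hasDerivAt_mul_const ‖z‖)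
    have hbound : ∀ t ∈ Set.Ico (0 : ℝ) 1, ‖R n (t * z) * z‖ ≤ (t * ‖z‖) ^ n / n ! * ‖z‖ := by
      intro t ht
      have hre : ((t : ℂ) * z).re ≤ 0 := by
        simpa using mul_nonpos_of_nonneg_of_nonpos ht.1 hz
      have hnorm : ‖(t : ℂ) * z‖ = t * ‖z‖ := by simp [abs_of_nonneg ht.1]
      rw [norm_mul, ← hnorm]
      gcongr
      exact ih hre
    have hR_zero : R (n + 1) ((0 : ℝ) * z) = 0 := by simp [R, sum_range_succ']
    simpa [R] using image_norm_le_of_norm_deriv_right_le_deriv_boundary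
      (fun t _ ↦ (hR t).continuousAt.continuousWithinAt) (fun t _ ↦ (hR t).hasDerivWithinAt)
      (by rw [hR_zero, norm_zero]; positivity) hB hbound (Set.right_mem_Icc.2 zero_le_one)

theorem norm_exp_sub_one_sub_le_of_re_nonpos {z : ℂ} (hz : z.re ≤ 0) :
    ‖Complex.exp z - 1 - z‖ ≤ ‖z‖ ^ 2 / 2 := by
  simpa [sum_range_succ, sub_sub] using norm_exp_sub_sum_le_of_re_nonpos 2 hz

theorem abs_exp_sub_one_sub_le_of_nonpos {x : ℝ} (hx : x ≤ 0) :
    |Real.exp x - 1 - x| ≤ x ^ 2 / 2 := by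
  have h := norm_exp_sub_one_sub_le_of_re_nonpos (z := x) (by simpa using hx)
  have hcast : Complex.exp x - 1 - x = ((Real.exp x - 1 - x : ℝ) : ℂ) := by push_cast; rfl
  simpa only [hcast, Complex.norm_real, Real.norm_eq_abs, sq_abs] using h

theorem abs_cos_add_sub_cos_add_mul_sin_le (θ u : ℝ) :
    |Real.cos (θ + u) - Real.cos θ + u * Real.sin θ| ≤ u ^ 2 / 2 := by
  let w : ℂ := Complex.exp (θ * Complex.I) *
    (Complex.exp (u * Complex.I) - 1 - u * Complex.I)
  have hre : w.re = Real.cos (θ + u) - Real.cos θ + u * Real.sin θ := by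
    simp only [w, Complex.mul_re, Complex.sub_re, Complex.sub_im, Complex.exp_ofReal_mul_I_re,
      Complex.exp_ofReal_mul_I_im, Complex.one_re, Complex.one_im, Complex.mul_im,
      Complex.ofReal_re, Complex.ofReal_im, Complex.I_re, Complex.I_im, Real.cos_add]
    ring
  calc |Real.cos (θ + u) - Real.cos θ + u * Real.sin θ|
      = |w.re| := by rw [hre]
    _ ≤ ‖w‖ := Complex.abs_re_le_norm w
    _ = ‖Complex.exp (u * Complex.I) - 1 - u * Complex.I‖ := by
      rw [norm_mul, Complex.norm_exp_ofReal_mul_I, one_mul]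
    _ ≤ ‖u * Complex.I‖ ^ 2 / 2 := norm_exp_sub_one_sub_le_of_re_nonpos (by simp)
    _ = u ^ 2 / 2 := by simp

theorem abs_cos_sub_mul_exp_neg_le {c s θ x : ℝ} (hcos : Real.cos θ = c)
    (hsin : s * Real.sin θ = c) (hx : 0 ≤ x) :
    |Real.cos (θ + s * x) - c * Real.exp (-x)| ≤ (s ^ 2 + |c|) * x ^ 2 / 2 := by
  have hsplit : Real.cos (θ + s * x) - c * Real.exp (-x) =
      (Real.cos (θ + s * x) - Real.cos θ + s * x * Real.sin θ) -
        c * (Real.exp (-x) - 1 - -x) := by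
    linear_combination hcos - x * hsin
  calc |Real.cos (θ + s * x) - c * Real.exp (-x)|
      ≤ |Real.cos (θ + s * x) - Real.cos θ + s * x * Real.sin θ| +
          |c| * |Real.exp (-x) - 1 - -x| := by
        rw [hsplit, ← abs_mul]
        exact abs_sub _ _
    _ ≤ (s * x) ^ 2 / 2 + |c| * ((-x) ^ 2 / 2) := by
        gcongr
        · exact abs_cos_add_sub_cos_add_mul_sin_le θ (s * x)
        · exact abs_exp_sub_one_sub_le_of_nonpos (neg_nonpos.2 hx)
    _ = (s ^ 2 + |c|) * x ^ 2 / 2 := by ring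

/-- Single-step error bound of the original approximate PITE of Kosugi et al.:
for `m₀ ∈ (0,1)`, `s₀ = m₀/√(1−m₀²)`, `θ₀ = arccos m₀`, and every `x ≥ 0`,
`|cos(θ₀ + s₀x) − m₀e^{−x}| ≤ (s₀² + m₀)x²/2`. -/
theorem stmt_14 (m₀ : ℝ) (hm₀ : m₀ ∈ Set.Ioo (0 : ℝ) 1)
    (s₀ θ₀ : ℝ) (hs₀ : s₀ = m₀ / Real.sqrt (1 - m₀ ^ 2)) (hθ₀ : θ₀ = Real.arccos m₀)
    (x : ℝ) (hx : 0 ≤ x) :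
    |Real.cos (θ₀ + s₀ * x) - m₀ * Real.exp (-x)| ≤ (s₀ ^ 2 + m₀) * x ^ 2 / 2 := by
  obtain ⟨hpos, hlt⟩ := hm₀
  have hcos : Real.cos θ₀ = m₀ := by
    rw [hθ₀, Real.cos_arccos (by linarith) hlt.le]
  have hsqrt : Real.sqrt (1 - m₀ ^ 2) ≠ 0 := (Real.sqrt_pos.2 (by nlinarith)).ne'
  have hsin : s₀ * Real.sin θ₀ = m₀ := by
    rw [hs₀, hθ₀, Real.sin_arccos, div_mul_cancel₀ _ hsqrt]
  simpa only [abs_of_pos hpos] using abs_cos_sub_mul_exp_neg_le hcos hsin hx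
end

section
/- There exist constants C > 0 and η > 0 such that for all y ∈ [0, η], | cos( √(2y) − (√2/6)·y^{3/2} ) − exp(−y) | ≤ C·y³. -/
/-!
For `y ≥ 0` the argument of the cosine is `t = √(2y) (1 - y/6)`, so `t²` is a polynomial in `y`.
Since `cos t` differs from `1 - t²/2 + t⁴/24` by at most `t⁶/720 = O(y³)`, and `e^{-y}` from
`1 - y + y²/2` by at most `y³/6`, it remains to compare these two polynomials in `y`; the factor
`1 - y/6` is exactly what makes their `y²` coefficients agree. The explicit constants sum to less
than `1/3` for `y ≤ 2`, and for `y ≥ 2` the trivial bound `2` is already below `y³/3`.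
-/

open Finset
open scoped Nat

theorem abs_sub_taylor_sum_le {f : ℝ → ℝ} {n : ℕ} {x₀ x C : ℝ}
    (hf : ∀ t ∈ Set.uIcc x₀ x, ContDiffAt ℝ n f t)
    (hC : ∀ t ∈ Set.uIcc x₀ x, |iteratedDeriv n f t| ≤ C) :
    |f x - ∑ k ∈ range n, iteratedDeriv k f x₀ / k ! * (x - x₀) ^ k| ≤
      C * |x - x₀| ^ n / n ! := by
  rcases n with _ | n
  · simpa using hC x Set.right_mem_uIcc
  rcases eq_or_ne x₀ x with rfl | hne
  · simp [sum_range_succ']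
  have hfOn : ContDiffOn ℝ (n + 1) f (Set.uIcc x₀ x) :=
    fun t ht ↦ mod_cast (hf t ht).contDiffWithinAt
  have taylor_eq : taylorWithinEval f n (Set.uIcc x₀ x) x₀ x =
      ∑ k ∈ range (n + 1), iteratedDeriv k f x₀ / k ! * (x - x₀) ^ k := by
    rw [taylor_within_apply]
    refine sum_congr rfl fun k hk ↦ ?_
    have hk' : (k : WithTop ℕ∞) ≤ (n + 1 : ℕ) := mod_cast (mem_range.1 hk).le
    rw [iteratedDerivWithin_eq_iteratedDeriv (uniqueDiffOn_uIcc hne)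
      ((hf x₀ Set.left_mem_uIcc).of_le hk') Set.left_mem_uIcc, smul_eq_mul]
    ring
  obtain ⟨ξ, hξ, remainder_eq⟩ := taylor_mean_remainder_lagrange_iteratedDeriv hne hfOn
  rw [← taylor_eq, remainder_eq, abs_div, abs_mul, abs_pow, Nat.abs_cast]
  gcongr
  exact hC ξ (Set.uIoo_subset_uIcc_self hξ)

theorem abs_exp_sub_sum_le_of_nonpos (n : ℕ) {x : ℝ} (hx : x ≤ 0) :
    |Real.exp x - ∑ k ∈ range n, x ^ k / k !| ≤ |x| ^ n / n ! := by
  have hC (t : ℝ) (ht : t ∈ Set.uIcc 0 x) : |iteratedDeriv n Real.exp t| ≤ 1 := by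
    rw [Set.uIcc_of_ge hx] at ht
    simpa [iteratedDeriv_eq_iterate] using ht.2
  simpa [iteratedDeriv_eq_iterate, inv_mul_eq_div] using
    abs_sub_taylor_sum_le (fun t _ ↦ Real.contDiff_exp.contDiffAt) hC

theorem abs_cos_sub_sum_le (n : ℕ) (x : ℝ) :
    |Real.cos x - ∑ k ∈ range n, (-1) ^ k * x ^ (2 * k) / (2 * k)!| ≤ x ^ (2 * n) / (2 * n)! := by
  have odd_terms_vanish : ∑ k ∈ range (2 * n), iteratedDeriv k Real.cos 0 / k ! * (x - 0) ^ k =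
      ∑ k ∈ range n, (-1) ^ k * x ^ (2 * k) / (2 * k)! := by
    induction n with
    | zero => simp
    | succ n ih =>
      rw [Nat.mul_succ, sum_range_succ, sum_range_succ, ih, sum_range_succ]
      simp [div_mul_eq_mul_div]
  have remainder_le := abs_sub_taylor_sum_le (n := 2 * n) (x := x) (x₀ := 0)
    (fun t _ ↦ Real.contDiff_cos.contDiffAt) fun t _ ↦ Real.abs_iteratedDeriv_cos_le_one (2 * n) t
  rwa [odd_terms_vanish, sub_zero, one_mul, (even_two_mul n).pow_abs] at remainder_le

section

variable {y : ℝ}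

theorem sqrt_two_mul_sub_sqrt_two_div_six_mul_rpow (hy : 0 ≤ y) :
    √(2 * y) - √2 / 6 * y ^ ((3 : ℝ) / 2) = √(2 * y) * (1 - y / 6) := by
  have rpow_eq : y ^ ((3 : ℝ) / 2) = y * √y := by
    rw [Real.rpow_div_two_eq_sqrt 3 hy, Real.rpow_ofNat, pow_succ, Real.sq_sqrt hy]
  rw [rpow_eq, Real.sqrt_mul zero_le_two]
  ring

theorem abs_quartic_sub_quadratic_le {t : ℝ} (hy : 0 ≤ y) (hy2 : y ≤ 2)
    (ht : t ^ 2 = 2 * y * (1 - y / 6) ^ 2) :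
    |(1 - t ^ 2 / 2 + t ^ 4 / 24) - (1 - y + y ^ 2 / 2)| ≤ 5 / 36 * y ^ 3 := by
  have difference_eq : (1 - t ^ 2 / 2 + t ^ 4 / 24) - (1 - y + y ^ 2 / 2) =
      (-5 / 36 + y / 36 - y ^ 2 / 324 + y ^ 3 / 7776) * y ^ 3 := by
    rw [show t ^ 4 = (t ^ 2) ^ 2 by ring, ht]
    ring
  have cofactor_le : |-5 / 36 + y / 36 - y ^ 2 / 324 + y ^ 3 / 7776| ≤ 5 / 36 := by
    rw [abs_le]
    constructor <;> nlinarith [pow_nonneg hy 3, mul_nonneg hy (sub_nonneg.2 hy2),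
      mul_nonneg (sq_nonneg y) (sub_nonneg.2 hy2)]
  rw [difference_eq, abs_mul, abs_of_nonneg (pow_nonneg hy 3)]
  gcongr

theorem abs_cos_sub_exp_neg_le_of_le_two {t : ℝ} (hy : 0 ≤ y) (hy2 : y ≤ 2)
    (ht : t ^ 2 = 2 * y * (1 - y / 6) ^ 2) :
    |Real.cos t - Real.exp (-y)| ≤ y ^ 3 / 3 := by
  have cos_taylor : |Real.cos t - (1 - t ^ 2 / 2 + t ^ 4 / 24)| ≤ t ^ 6 / 720 := by
    convert abs_cos_sub_sum_le 3 t using 3 <;> norm_num [sum_range_succ, Nat.factorial]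
    ring
  have exp_taylor : |Real.exp (-y) - (1 - y + y ^ 2 / 2)| ≤ y ^ 3 / 6 := by
    convert abs_exp_sub_sum_le_of_nonpos 3 (neg_nonpos.2 hy) using 2 <;>
      norm_num [sum_range_succ, Nat.factorial, abs_of_nonneg hy]
    ring
  have ht6 : t ^ 6 ≤ 8 * y ^ 3 := by
    have t_sq_le : t ^ 2 ≤ 2 * y := by
      rw [ht]
      exact mul_le_of_le_one_right (by positivity) (pow_le_one₀ (by linarith) (by linarith))
    calc t ^ 6 = (t ^ 2) ^ 3 := by ring
      _ ≤ (2 * y) ^ 3 := by gcongr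
      _ = 8 * y ^ 3 := by ring
  have polynomials_close := abs_quartic_sub_quadratic_le hy hy2 ht
  have hy3 : 0 ≤ y ^ 3 := pow_nonneg hy 3
  rw [abs_le] at *
  constructor <;> linarith

theorem abs_cos_sub_exp_neg_le_two (t : ℝ) (hy : 0 ≤ y) :
    |Real.cos t - Real.exp (-y)| ≤ 2 := by
  have exp_le_one : Real.exp (-y) ≤ 1 := Real.exp_le_one_iff.2 (neg_nonpos.2 hy)
  rw [abs_le]
  constructor <;> linarith [Real.neg_one_le_cos t, Real.cos_le_one t, Real.exp_pos (-y)]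

theorem stmt_18_general (hy : 0 ≤ y) :
    |Real.cos (√(2 * y) - √2 / 6 * y ^ ((3 : ℝ) / 2)) - Real.exp (-y)| ≤ y ^ 3 / 3 := by
  rw [sqrt_two_mul_sub_sqrt_two_div_six_mul_rpow hy]
  rcases le_total y 2 with hy2 | hy2
  · refine abs_cos_sub_exp_neg_le_of_le_two hy hy2 ?_
    rw [mul_pow, Real.sq_sqrt (by positivity)]
  · calc
      _ ≤ 2 := abs_cos_sub_exp_neg_le_two _ hy
      _ ≤ 2 ^ 3 / 3 := by norm_num
      _ ≤ y ^ 3 / 3 := by gcongr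

end

/-- Scalar form of the second-order alternative approximate PITE: there are `C > 0`
and `η > 0` with `|cos(√(2y) − (√2/6)y^{3/2}) − e^{−y}| ≤ C·y³` for all `y ∈ [0, η]`. -/
theorem stmt_18 :
    ∃ C > (0 : ℝ), ∃ η > (0 : ℝ), ∀ y ∈ Set.Icc (0 : ℝ) η,
      |Real.cos (Real.sqrt (2 * y) - (Real.sqrt 2 / 6) * y ^ ((3 : ℝ) / 2))
          - Real.exp (-y)| ≤ C * y ^ 3 := by
  refine ⟨1 / 3, by norm_num, 1, one_pos, fun y hy ↦ ?_⟩
  simpa only [one_div_mul_eq_div] using stmt_18_general hy.1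
end

section
/- There exist constants C > 0 and η > 0 such that for all y ∈ [0, η], | cos( √(2y) − (√2/6)·y^{3/2} + (√2/120)·y^{5/2} + (√2/336)·y^{7/2} ) − exp(−y) | ≤ C·y⁵. -/
/-!
Since `cos θ` is a power series in `θ²`, only `θ² = arccos(e^{-y})² + O(y⁵)` matters, and the right
side has the Taylor polynomial `S(y) = 2y - (2/3)y² + (4/45)y³ + (2/315)y⁴`. Working modulo `y⁵`,
the powers of `θ²` are congruent to
`S`, `4y² - (8/3)y³ + (4/5)y⁴`, `8y³ - 8y⁴`, `16y⁴`,
and inserting them in `1 - θ²/2 + θ⁴/24 - θ⁶/720 + θ⁸/40320` leaves exactly the fourth-order Taylor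
polynomial of `e^{-y}`. The phase in the theorem is `√(2y)` times a polynomial, so its square is a
polynomial for `y ≥ 0`, and that polynomial agrees with `S` modulo `y⁵`.
-/

open Asymptotics Filter Topology
open scoped Nat

section Asymptotics

theorem exists_Icc_norm_le_of_isBigO_nhdsGE {α E F : Type*} [LinearOrder α] [TopologicalSpace α]
    [OrderTopology α] [DenselyOrdered α] [NoMaxOrder α] [Norm E] [SeminormedAddCommGroup F] {a : α}
    {f : α → E} {g : α → F} (h : f =O[𝓝[≥] a] g) :
    ∃ C > (0 : ℝ), ∃ b > a, ∀ x ∈ Set.Icc a b, ‖f x‖ ≤ C * ‖g x‖ := by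
  obtain ⟨C, hC, hfg⟩ := h.exists_pos
  obtain ⟨b, hab, hb⟩ := mem_nhdsGE_iff_exists_Icc_subset.mp hfg.bound
  exact ⟨C, hC, b, hab, hb⟩

theorem mul_isBigO_left_of_continuousAt {α 𝕜 : Type*} [TopologicalSpace α] [NormedField 𝕜]
    {a : α} {l : Filter α} (hl : l ≤ 𝓝 a) {q : α → 𝕜} (hq : ContinuousAt q a) (g : α → 𝕜) :
    (fun x => g x * q x) =O[l] g := by
  simpa only [mul_one] using (isBigO_refl g l).mul ((hq.mono_left hl).isBigO_one 𝕜)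

theorem isBigO_mul_sub_mul {α R 𝕜 : Type*} [SeminormedRing R] [NormedField 𝕜]
    {l : Filter α} {f₁ f₂ g₁ g₂ : α → R} {h : α → 𝕜}
    (h₁ : (fun x => f₁ x - g₁ x) =O[l] h) (h₂ : (fun x => f₂ x - g₂ x) =O[l] h)
    (hf₁ : f₁ =O[l] fun _ => (1 : 𝕜)) (hg₂ : g₂ =O[l] fun _ => (1 : 𝕜)) :
    (fun x => f₁ x * f₂ x - g₁ x * g₂ x) =O[l] h := by
  have hleft : (fun x => f₁ x * (f₂ x - g₂ x)) =O[l] h := by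
    simpa only [one_mul] using hf₁.mul h₂
  have hright : (fun x => (f₁ x - g₁ x) * g₂ x) =O[l] h := by
    simpa only [mul_one] using h₁.mul hg₂
  refine (hleft.add hright).congr_left fun x => ?_
  noncomm_ring

theorem mul_sub_isBigO_of_mul_sub_eq_mul {α 𝕜 : Type*} [TopologicalSpace α] [NormedField 𝕜]
    {a : α} {l : Filter α} (hl : l ≤ 𝓝 a) {f₁ f₂ g₁ g₂ r q h : α → 𝕜}
    (h₁ : (fun x => f₁ x - g₁ x) =O[l] h) (h₂ : (fun x => f₂ x - g₂ x) =O[l] h)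
    (hg₁ : ContinuousAt g₁ a) (hg₂ : ContinuousAt g₂ a) (hh : ContinuousAt h a)
    (hq : ContinuousAt q a) (hr : ∀ x, g₁ x * g₂ x - r x = h x * q x) :
    (fun x => f₁ x * f₂ x - r x) =O[l] h := by
  have isBigO_one {u : α → 𝕜} (hu : ContinuousAt u a) : u =O[l] fun _ => (1 : 𝕜) :=
    (hu.mono_left hl).isBigO_one 𝕜
  have hf₁ : f₁ =O[l] fun _ => (1 : 𝕜) :=
    ((h₁.trans (isBigO_one hh)).add (isBigO_one hg₁)).congr_left fun x => sub_add_cancel _ _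
  refine ((isBigO_mul_sub_mul h₁ h₂ hf₁ (isBigO_one hg₂)).add
    (mul_isBigO_left_of_continuousAt hl hq h)).congr_left fun x => ?_
  rw [← hr x, sub_add_sub_cancel]

end Asymptotics

section CosTaylor

theorem re_sum_range_mul_I_pow_div_factorial (x : ℝ) (n : ℕ) :
    (∑ m ∈ Finset.range (2 * n), (x * Complex.I) ^ m / (m ! : ℂ)).re =
      ∑ k ∈ Finset.range n, (-1) ^ k * x ^ (2 * k) / ((2 * k)! : ℝ) := by
  induction n with
  | zero => simp
  | succ n ih =>
    have heven : (x * Complex.I) ^ (2 * n) / ((2 * n)! : ℂ) =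
        (((-1) ^ n * x ^ (2 * n) / ((2 * n)! : ℝ) : ℝ) : ℂ) := by
      rw [mul_pow, pow_mul Complex.I, Complex.I_sq]
      push_cast
      ring
    have hodd : (x * Complex.I) ^ (2 * n + 1) / ((2 * n + 1)! : ℂ) =
        (((-1) ^ n * x ^ (2 * n + 1) / ((2 * n + 1)! : ℝ) : ℝ) : ℂ) * Complex.I := by
      rw [mul_pow, pow_succ Complex.I, pow_mul Complex.I, Complex.I_sq]
      push_cast
      ring
    rw [Nat.mul_succ, Finset.sum_range_succ, Finset.sum_range_succ, Finset.sum_range_succ,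
      Complex.add_re, Complex.add_re, ih, heven, hodd, Complex.ofReal_re, Complex.re_ofReal_mul,
      Complex.I_re, mul_zero, add_zero]

theorem cos_sub_sum_range_isBigO_pow (n : ℕ) :
    (fun x : ℝ => Real.cos x - ∑ k ∈ Finset.range n, (-1) ^ k * x ^ (2 * k) / ((2 * k)! : ℝ))
      =O[𝓝 0] (· ^ (2 * n)) := by
  have hI : Tendsto (fun x : ℝ => x * Complex.I) (𝓝 0) (𝓝 0) :=
    (by fun_prop : Continuous fun x : ℝ => x * Complex.I).tendsto' 0 0 (by simp)
  have hexp := (Complex.exp_sub_sum_range_isBigO_pow (2 * n)).comp_tendsto hI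
  refine ((isBigO_of_le _ fun x => ?_).trans hexp).trans (isBigO_of_le _ fun x => ?_)
  · have hre := Complex.abs_re_le_norm (Complex.exp (x * Complex.I) -
      ∑ m ∈ Finset.range (2 * n), (x * Complex.I) ^ m / (m ! : ℂ))
    rwa [Complex.sub_re, Complex.exp_ofReal_mul_I_re, re_sum_range_mul_I_pow_div_factorial] at hre
  · simp

end CosTaylor

section Phase

/-- The fourth-order Taylor polynomial, from the right at `0`, of `y ↦ arccos (exp (-y)) ^ 2`, the
square of the phase whose cosine is `exp (-y)`. -/
noncomputable def arccosExpNegSqTaylor (y : ℝ) : ℝ :=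
  2 * y - 2 / 3 * y ^ 2 + 4 / 45 * y ^ 3 + 2 / 315 * y ^ 4

theorem continuous_arccosExpNegSqTaylor : Continuous arccosExpNegSqTaylor := by
  unfold arccosExpNegSqTaylor
  fun_prop

variable {l : Filter ℝ} {t : ℝ → ℝ}

theorem isBigO_id_of_sub_arccosExpNegSqTaylor_isBigO (hl : l ≤ 𝓝 0)
    (ht : (fun y => t y - arccosExpNegSqTaylor y) =O[l] (· ^ 5)) : t =O[l] id := by
  have hpow : (fun y : ℝ => y ^ 5) =O[l] id :=
    (mul_isBigO_left_of_continuousAt hl (q := (· ^ 4)) (by fun_prop) id).congr_left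
      fun y => by simp only [id]; ring
  have htaylor : arccosExpNegSqTaylor =O[l] id :=
    (mul_isBigO_left_of_continuousAt hl
      (q := fun y => 2 - 2 / 3 * y + 4 / 45 * y ^ 2 + 2 / 315 * y ^ 3) (by fun_prop) id).congr_left
      fun y => by simp only [id, arccosExpNegSqTaylor]; ring
  exact ((ht.trans hpow).add htaylor).congr_left fun y => sub_add_cancel _ _

theorem tendsto_zero_of_sub_arccosExpNegSqTaylor_isBigO (hl : l ≤ 𝓝 0)
    (ht : (fun y => t y - arccosExpNegSqTaylor y) =O[l] (· ^ 5)) : Tendsto t l (𝓝 0) :=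
  (isBigO_id_of_sub_arccosExpNegSqTaylor_isBigO hl ht).trans_tendsto hl

theorem cosTaylor_sub_expNegTaylor_isBigO (hl : l ≤ 𝓝 0)
    (ht : (fun y => t y - arccosExpNegSqTaylor y) =O[l] (· ^ 5)) :
    (fun y => (1 - t y / 2 + t y ^ 2 / 24 - t y ^ 3 / 720 + t y ^ 4 / 40320) -
      (1 - y + y ^ 2 / 2 - y ^ 3 / 6 + y ^ 4 / 24)) =O[l] (· ^ 5) := by
  have hS : ContinuousAt arccosExpNegSqTaylor 0 := continuous_arccosExpNegSqTaylor.continuousAt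
  have ht₂ : (fun y => t y * t y - (4 * y ^ 2 - 8 / 3 * y ^ 3 + 4 / 5 * y ^ 4)) =O[l] (· ^ 5) :=
    mul_sub_isBigO_of_mul_sub_eq_mul hl ht ht
      (q := fun y => -88 / 945 - 8 / 14175 * y + 16 / 14175 * y ^ 2 + 4 / 99225 * y ^ 3)
      hS hS (by fun_prop) (by fun_prop) fun y => by unfold arccosExpNegSqTaylor; ring
  have ht₃ : (fun y => t y * t y * t y - (8 * y ^ 3 - 8 * y ^ 4)) =O[l] (· ^ 5) :=
    mul_sub_isBigO_of_mul_sub_eq_mul hl ht₂ ht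
      (q := fun y => 56 / 15 - 704 / 945 * y + 256 / 4725 * y ^ 2 + 8 / 1575 * y ^ 3)
      (by fun_prop) hS (by fun_prop) (by fun_prop) fun y => by unfold arccosExpNegSqTaylor; ring
  have ht₄ : (fun y => t y * t y * t y * t y - 16 * y ^ 4) =O[l] (· ^ 5) :=
    mul_sub_isBigO_of_mul_sub_eq_mul hl ht₃ ht
      (q := fun y => -64 / 3 + 272 / 45 * y - 208 / 315 * y ^ 2 - 16 / 315 * y ^ 3)
      (by fun_prop) hS (by fun_prop) (by fun_prop) fun y => by unfold arccosExpNegSqTaylor; ring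
  refine ((((ht.const_mul_left (-1 / 2)).add (ht₂.const_mul_left (1 / 24))).add
    (ht₃.const_mul_left (-1 / 720))).add (ht₄.const_mul_left (1 / 40320))).congr_left fun y => ?_
  unfold arccosExpNegSqTaylor
  ring

theorem exp_neg_sub_expNegTaylor_isBigO :
    (fun y => Real.exp (-y) - (1 - y + y ^ 2 / 2 - y ^ 3 / 6 + y ^ 4 / 24)) =O[𝓝 0] (· ^ 5) := by
  have hneg : Tendsto (fun y : ℝ => -y) (𝓝 0) (𝓝 0) := continuous_neg.tendsto' 0 0 neg_zero
  have hexp := (Real.exp_sub_sum_range_isBigO_pow 5).comp_tendsto hneg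
  refine (hexp.congr_left fun y => ?_).trans (isBigO_of_le _ fun y => by simp)
  simp only [Function.comp_apply, Finset.sum_range_succ, Finset.sum_range_zero, Nat.factorial]
  push_cast
  ring

theorem cos_sub_cosTaylor_isBigO :
    (fun x => Real.cos x - (1 - x ^ 2 / 2 + (x ^ 2) ^ 2 / 24 - (x ^ 2) ^ 3 / 720 +
      (x ^ 2) ^ 4 / 40320)) =O[𝓝 0] fun x => (x ^ 2) ^ 5 := by
  refine (cos_sub_sum_range_isBigO_pow 5).congr (fun x => ?_) fun x => pow_mul x 2 5
  simp only [Finset.sum_range_succ, Finset.sum_range_zero, Nat.factorial]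
  push_cast
  ring

theorem cos_sub_exp_neg_isBigO (hl : l ≤ 𝓝 0) {θ : ℝ → ℝ}
    (hθ : (fun y => θ y ^ 2 - arccosExpNegSqTaylor y) =O[l] (· ^ 5)) :
    (fun y => Real.cos (θ y) - Real.exp (-y)) =O[l] (· ^ 5) := by
  have hθ_zero : Tendsto θ l (𝓝 0) := by
    have hsq := tendsto_zero_of_sub_arccosExpNegSqTaylor_isBigO hl hθ
    rw [← isLittleO_one_iff ℝ] at hsq ⊢
    exact IsLittleO.of_pow (n := 2) (by simpa only [Pi.pow_def, one_pow] using hsq) two_ne_zero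
  have hcos := (cos_sub_cosTaylor_isBigO.comp_tendsto hθ_zero).trans
    ((isBigO_id_of_sub_arccosExpNegSqTaylor_isBigO hl hθ).pow 5)
  have hpoly := cosTaylor_sub_expNegTaylor_isBigO hl hθ
  have hexp := exp_neg_sub_expNegTaylor_isBigO.mono hl
  refine ((hcos.add hpoly).sub hexp).congr_left fun y => ?_
  simp only [Function.comp_apply]
  ring

/-- The scalar phase of the fourth-order approximate PITE operator: the seventh-order Taylor
polynomial of `x ↦ arccos (exp (-x ^ 2))`, on `0 ≤ x`, evaluated at `x = √y`. -/
noncomputable def pitePhase (y : ℝ) : ℝ :=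
  Real.sqrt (2 * y) - (Real.sqrt 2 / 6) * y ^ ((3 : ℝ) / 2)
    + (Real.sqrt 2 / 120) * y ^ ((5 : ℝ) / 2)
    + (Real.sqrt 2 / 336) * y ^ ((7 : ℝ) / 2)

theorem pitePhase_eq_sqrt_mul {y : ℝ} (hy : 0 ≤ y) :
    pitePhase y = √(2 * y) * (1 - y / 6 + y ^ 2 / 120 + y ^ 3 / 336) := by
  have hsq : √y ^ 2 = y := Real.sq_sqrt hy
  have h₃ : √y ^ 3 = √y * y := by rw [pow_succ', hsq]
  have h₅ : √y ^ 5 = √y * y ^ 2 := by rw [pow_succ', pow_mul _ 2 2, hsq]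
  have h₇ : √y ^ 7 = √y * y ^ 3 := by rw [pow_succ', pow_mul _ 2 3, hsq]
  simp only [pitePhase, Real.rpow_div_two_eq_sqrt _ hy, Real.rpow_ofNat,
    Real.sqrt_mul zero_le_two y, h₃, h₅, h₇]
  ring

theorem pitePhase_sq_sub_arccosExpNegSqTaylor_isBigO :
    (fun y => pitePhase y ^ 2 - arccosExpNegSqTaylor y) =O[𝓝[≥] 0] (· ^ 5) := by
  have hremainder := mul_isBigO_left_of_continuousAt
    (nhdsWithin_le_nhds (a := (0 : ℝ)) (s := Set.Ici 0))
    (q := fun y => -31 / 16800 + y / 10080 + y ^ 2 / 56448) (by fun_prop) (· ^ 5)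
  refine hremainder.congr' ?_ EventuallyEq.rfl
  filter_upwards [self_mem_nhdsWithin] with y (hy : 0 ≤ y)
  rw [pitePhase_eq_sqrt_mul hy, mul_pow, Real.sq_sqrt (by positivity), arccosExpNegSqTaylor]
  ring

end Phase

/-- Scalar form of the fourth-order alternative approximate PITE: there are `C > 0`
and `η > 0` with
`|cos(√(2y) − (√2/6)y^{3/2} + (√2/120)y^{5/2} + (√2/336)y^{7/2}) − e^{−y}| ≤ C·y⁵`
for all `y ∈ [0, η]`. -/
theorem stmt_19 :
    ∃ C > (0 : ℝ), ∃ η > (0 : ℝ), ∀ y ∈ Set.Icc (0 : ℝ) η,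
      |Real.cos (Real.sqrt (2 * y) - (Real.sqrt 2 / 6) * y ^ ((3 : ℝ) / 2)
            + (Real.sqrt 2 / 120) * y ^ ((5 : ℝ) / 2)
            + (Real.sqrt 2 / 336) * y ^ ((7 : ℝ) / 2))
          - Real.exp (-y)| ≤ C * y ^ 5 := by
  have hbigO : (fun y => Real.cos (pitePhase y) - Real.exp (-y)) =O[𝓝[≥] 0] (· ^ 5) :=
    cos_sub_exp_neg_isBigO nhdsWithin_le_nhds pitePhase_sq_sub_arccosExpNegSqTaylor_isBigO
  obtain ⟨C, hC, η, hη, hbound⟩ := exists_Icc_norm_le_of_isBigO_nhdsGE hbigO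
  refine ⟨C, hC, η, hη, fun y hy => ?_⟩
  simpa only [pitePhase, Real.norm_eq_abs, abs_of_nonneg (pow_nonneg hy.1 5)] using hbound y hy
end
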